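/- Let P be the Borel probability measure on ℝ with density f given by f(x) = 1/2 for x ∈ [0, 1/2] ∪ [1, 3/2], f(x) = 1 for x ∈ (1/2, 1), and f(x) = 0 otherwise. Then the set { (3 + 2√5)/44, 3(3 + 2√5)/44, 3/4, (57 − 6√5)/44, (63 − 2√5)/44 } ≈ {0.169821, 0.509464, 0.75, 0.990536, 1.330179} is an optimal set of five-means for P, and the fifth quantization error is V₅(P) = (109 − 30√5)/5808 ≈ 0.00721728. -/

import Mathlib

open MeasureTheory Set

/-- Distortion error of a set `α` with respect to the measure `Q`. -/
noncomputable def distortion (Q : Measure ℝ) (α : Set ℝ) : ℝ :=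
  ∫ x, sInf ((fun a => (x - a) ^ 2) '' α) ∂Q

/-- The `n`-th quantization error of the measure `Q`. -/
noncomputable def quantErr (Q : Measure ℝ) (n : ℕ) : ℝ :=
  sInf { v : ℝ | ∃ α : Set ℝ, α.Finite ∧ α.Nonempty ∧ α.ncard ≤ n ∧ v = distortion Q α }

/-- `α` is an optimal set of `n`-means for `Q`. -/
def IsOptimal (Q : Measure ℝ) (n : ℕ) (α : Set ℝ) : Prop :=
  α.Finite ∧ 1 ≤ α.ncard ∧ α.ncard ≤ n ∧ distortion Q α = quantErr Q n

/-- The density of the mixed distribution `P = (1/2) P₁ + (1/2) P₂`. -/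
noncomputable def f2 (x : ℝ) : ℝ :=
  if x ∈ Icc (0 : ℝ) (1 / 2) ∪ Icc (1 : ℝ) (3 / 2) then 1 / 2
  else if x ∈ Ioo (1 / 2 : ℝ) 1 then 1
  else 0

/-- The mixed distribution `P = (1/2) P₁ + (1/2) P₂`. -/
noncomputable def P2 : Measure ℝ :=
  volume.withDensity fun x => ENNReal.ofReal (f2 x)

/-!
The distortion of a finite set `S` is the integral of `infDist x S ^ 2`, and a gap of length `g`
between neighbouring points contributes `g ^ 3 / 12` wherever the density is `1`. Convexity gives
`g ^ 3 / 12 ≥ R ^ 2 * g - 4 / 3 * R ^ 3` with `R = innerRadius`, half the gap of the optimal set in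
the dense interval `[1 / 2, 1]`; the right side is linear both in `g` and in the number of gaps.
Cutting `S` at its points nearest to `1 / 2` and to `1` therefore separates the variables: the
distortion is at least a constant, minus `4 / 3 * R ^ 3` per gap, plus a boundary cost for each end.
The cost of an end depends only on its cut point and on its number of points, and once each of these
is charged `4 / 3 * R ^ 3` it is smallest for two points and the cut point `3 * outerRadius`.
-/

open Metric

/-! ### Distance to a finite set of reals -/

lemma infDist_le_infDist_of_forall_exists_dist_le {X : Type*} [PseudoMetricSpace X] {S T : Set X}
    {x : X} (hS : S.Nonempty) (h : ∀ y ∈ S, ∃ z ∈ T, dist x z ≤ dist x y) :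
    infDist x T ≤ infDist x S := by
  refine (le_infDist hS).2 fun y hy => ?_
  obtain ⟨z, hz, hzy⟩ := h y hy
  exact (infDist_le_dist_of_mem hz).trans hzy

lemma sInf_image_sub_sq_eq_infDist_sq {S : Set ℝ} (hS : S.Nonempty) (x : ℝ) :
    sInf ((fun a => (x - a) ^ 2) '' S) = infDist x S ^ 2 := by
  refine IsGLB.csInf_eq ⟨?_, fun c hc => ?_⟩ (hS.image _)
  · rintro _ ⟨a, ha, rfl⟩
    change infDist x S ^ 2 ≤ (x - a) ^ 2
    rw [← sq_abs (x - a)]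
    exact pow_le_pow_left₀ infDist_nonneg (infDist_le_dist_of_mem ha) 2
  · refine Real.sqrt_le_left infDist_nonneg |>.1 <| (le_infDist hS).2 fun a ha => ?_
    exact (Real.sqrt_le_sqrt (hc ⟨a, ha, rfl⟩)).trans_eq (Real.sqrt_sq_eq_abs _)

lemma distortion_eq_integral_infDist_sq (Q : Measure ℝ) {S : Set ℝ} (hS : S.Nonempty) :
    distortion Q S = ∫ x, infDist x S ^ 2 ∂Q := by
  simp only [distortion, sInf_image_sub_sq_eq_infDist_sq hS]

lemma isOptimal_of_forall_distortion_le {Q : Measure ℝ} {n : ℕ} {S : Finset ℝ} (hS : S.Nonempty)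
    (hcard : S.card ≤ n)
    (hmin : ∀ T : Finset ℝ, T.Nonempty → T.card ≤ n → distortion Q S ≤ distortion Q T) :
    IsOptimal Q n S := by
  have hleast : IsLeast {v : ℝ | ∃ α : Set ℝ, α.Finite ∧ α.Nonempty ∧ α.ncard ≤ n ∧
      v = distortion Q α} (distortion Q S) := by
    refine ⟨⟨S, S.finite_toSet, hS, by rwa [ncard_coe_finset], rfl⟩, ?_⟩
    rintro _ ⟨α, hfin, hne, hα, rfl⟩
    lift α to Finset ℝ using hfin
    exact hmin α hne (by rwa [ncard_coe_finset] at hα)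
  refine ⟨S.finite_toSet, ?_, by rwa [ncard_coe_finset], hleast.csInf_eq.symm⟩
  rw [ncard_coe_finset]
  exact hS.card_pos

lemma infDist_image_projIcc_le {S : Set ℝ} (hS : S.Nonempty) {l u x : ℝ} (h : l ≤ u)
    (hx : x ∈ Icc l u) : infDist x ((fun y => (projIcc l u h y : ℝ)) '' S) ≤ infDist x S := by
  refine infDist_le_infDist_of_forall_exists_dist_le hS fun y hy => ⟨_, mem_image_of_mem _ hy, ?_⟩
  have hproj := abs_projIcc_sub_projIcc (c := x) (d := y) h
  rwa [projIcc_of_mem h hx] at hproj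

section Split

variable {S : Finset ℝ} {m a x : ℝ}

lemma infDist_filter_le_le_infDist (ha : a ∈ S) (hnear : ∀ y ∈ S, |m - a| ≤ |m - y|)
    (hx : x ≤ m) : infDist x (S.filter (· ≤ a) : Finset ℝ) ≤ infDist x (S : Set ℝ) := by
  refine infDist_le_infDist_of_forall_exists_dist_le ⟨a, ha⟩ fun y hy => ?_
  rcases le_or_gt y a with hya | hay
  · exact ⟨y, by simpa using ⟨hy, hya⟩, le_rfl⟩
  · refine ⟨a, by simpa using ha, ?_⟩
    have := hnear y hy
    rw [Real.dist_eq, Real.dist_eq]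
    grind

lemma infDist_filter_ge_le_infDist (ha : a ∈ S) (hnear : ∀ y ∈ S, |m - a| ≤ |m - y|)
    (hx : m ≤ x) : infDist x (S.filter (a ≤ ·) : Finset ℝ) ≤ infDist x (S : Set ℝ) := by
  refine infDist_le_infDist_of_forall_exists_dist_le ⟨a, ha⟩ fun y hy => ?_
  rcases le_or_gt a y with hay | hya
  · exact ⟨y, by simpa using ⟨hy, hay⟩, le_rfl⟩
  · refine ⟨a, by simpa using ha, ?_⟩
    have := hnear y hy
    rw [Real.dist_eq, Real.dist_eq]
    grind

lemma card_filter_le_add_card_filter_ge (ha : a ∈ S) :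
    (S.filter (· ≤ a)).card + (S.filter (a ≤ ·)).card = S.card + 1 := by
  have hunion : S.filter (· ≤ a) ∪ S.filter (a ≤ ·) = S := by
    ext y
    simpa [← and_or_left] using fun _ => le_total y a
  have hinter : S.filter (· ≤ a) ∩ S.filter (a ≤ ·) = {a} := by
    ext y
    simp only [Finset.mem_inter, Finset.mem_filter, Finset.mem_singleton]
    exact ⟨fun h => le_antisymm h.1.2 h.2.2, by rintro rfl; simpa using ha⟩
  rw [← Finset.card_union_add_card_inter, hunion, hinter, Finset.card_singleton]

lemma isGreatest_filter_le (ha : a ∈ S) : IsGreatest (S.filter (· ≤ a) : Finset ℝ) a :=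
  ⟨by simpa using ha, fun y hy => (Finset.mem_filter.1 hy).2⟩

lemma isLeast_filter_ge (ha : a ∈ S) : IsLeast (S.filter (a ≤ ·) : Finset ℝ) a :=
  ⟨by simpa using ha, fun y hy => (Finset.mem_filter.1 hy).2⟩

end Split

lemma exists_le_forall_abs_sub_le {S : Finset ℝ} (hS : S.Nonempty) {p q : ℝ} (hpq : p ≤ q) :
    ∃ b ∈ S, ∃ a ∈ S.filter (· ≤ b), (∀ y ∈ S, |q - b| ≤ |q - y|) ∧ ∀ y ∈ S, |p - a| ≤ |p - y| := by
  obtain ⟨b, hb, hbmin⟩ := S.exists_min_image (|q - ·|) hS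
  obtain ⟨a, ha, hamin⟩ := (S.filter (· ≤ b)).exists_min_image (|p - ·|) ⟨b, by simpa using hb⟩
  refine ⟨b, hb, a, ha, hbmin, fun y hy => ?_⟩
  rcases le_or_gt y b with hyb | hby
  · exact hamin y (Finset.mem_filter.2 ⟨hy, hyb⟩)
  · refine (hamin b (by simpa using hb)).trans ?_
    have := hbmin y hy
    grind

lemma exists_split_at_nearest {S : Finset ℝ} (hS : S.Nonempty) {p q : ℝ} (hpq : p ≤ q) :
    ∃ (L M R : Finset ℝ) (a b : ℝ),
      IsGreatest (L : Set ℝ) a ∧ IsLeast (M : Set ℝ) a ∧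
      IsGreatest (M : Set ℝ) b ∧ IsLeast (R : Set ℝ) b ∧
      L ⊆ S ∧ R ⊆ S ∧ L.card + M.card + R.card = S.card + 2 ∧
      (∀ y ∈ S, |p - a| ≤ |p - y|) ∧ (∀ y ∈ S, |q - b| ≤ |q - y|) ∧
      (∀ x ≤ p, infDist x (L : Set ℝ) ≤ infDist x (S : Set ℝ)) ∧
      (∀ x ∈ Icc p q, infDist x (M : Set ℝ) ≤ infDist x (S : Set ℝ)) ∧
      ∀ x, q ≤ x → infDist x (R : Set ℝ) ≤ infDist x (S : Set ℝ) := by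
  obtain ⟨b, hb, a, ha, hb_near, ha_near⟩ := exists_le_forall_abs_sub_le hS hpq
  set T := S.filter (· ≤ b)
  have hTS : T ⊆ S := Finset.filter_subset _ _
  have hbT : IsGreatest (T : Set ℝ) b := isGreatest_filter_le hb
  have ha_nearT : ∀ y ∈ T, |p - a| ≤ |p - y| := fun y hy => ha_near y (hTS hy)
  have hT : ∀ x ≤ q, infDist x (T : Set ℝ) ≤ infDist x (S : Set ℝ) := fun x hx =>
    infDist_filter_le_le_infDist hb hb_near hx
  refine ⟨T.filter (· ≤ a), T.filter (a ≤ ·), S.filter (b ≤ ·), a, b,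
    isGreatest_filter_le ha, isLeast_filter_ge ha,
    ⟨Finset.mem_filter.2 ⟨hbT.1, hbT.2 ha⟩, fun y hy => hbT.2 (Finset.mem_filter.1 hy).1⟩,
    isLeast_filter_ge hb, (Finset.filter_subset _ _).trans hTS, Finset.filter_subset _ _, ?_,
    ha_near, hb_near,
    fun x hx => (infDist_filter_le_le_infDist ha ha_nearT hx).trans (hT x (hx.trans hpq)),
    fun x hx => (infDist_filter_ge_le_infDist ha ha_nearT hx.1).trans (hT x hx.2),
    fun x hx => infDist_filter_ge_le_infDist hb hb_near hx⟩
  rw [card_filter_le_add_card_filter_ge ha, add_right_comm, card_filter_le_add_card_filter_ge hb]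

/-! ### Squared distance integrated over an interval -/

lemma integral_sub_sq (s t a : ℝ) :
    ∫ x in s..t, (x - a) ^ 2 = ((t - a) ^ 3 - (s - a) ^ 3) / 3 := by
  rw [intervalIntegral.integral_comp_sub_right (fun x => x ^ 2), integral_pow]
  norm_num

lemma intervalIntegrable_infDist_sq (S : Set ℝ) (s t : ℝ) :
    IntervalIntegrable (fun x => infDist x S ^ 2) volume s t :=
  ((continuous_infDist_pt S).pow 2).intervalIntegrable s t

lemma integral_infDist_sq_add_adjacent (S : Set ℝ) (s m t : ℝ) :
    (∫ x in s..m, infDist x S ^ 2) + ∫ x in m..t, infDist x S ^ 2 =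
      ∫ x in s..t, infDist x S ^ 2 :=
  intervalIntegral.integral_add_adjacent_intervals (intervalIntegrable_infDist_sq S s m)
    (intervalIntegrable_infDist_sq S m t)

lemma integral_infDist_sq_mono {S T : Set ℝ} {s t : ℝ} (hst : s ≤ t)
    (h : ∀ x ∈ Icc s t, infDist x S ≤ infDist x T) :
    ∫ x in s..t, infDist x S ^ 2 ≤ ∫ x in s..t, infDist x T ^ 2 :=
  intervalIntegral.integral_mono_on hst (intervalIntegrable_infDist_sq S s t)
    (intervalIntegrable_infDist_sq T s t) fun x hx => pow_le_pow_left₀ infDist_nonneg (h x hx) 2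

lemma integral_infDist_sq_le {S : Set ℝ} {s t a : ℝ} (hst : s ≤ t) (ha : a ∈ S) :
    ∫ x in s..t, infDist x S ^ 2 ≤ ((t - a) ^ 3 - (s - a) ^ 3) / 3 := by
  simpa [Real.dist_eq, integral_sub_sq] using
    integral_infDist_sq_mono (T := {a}) hst fun x _ => by simpa using infDist_le_dist_of_mem ha

lemma integral_infDist_sq_of_nearest {S : Set ℝ} {s t a : ℝ} (hst : s ≤ t) (ha : a ∈ S)
    (hnear : ∀ x ∈ Icc s t, ∀ y ∈ S, |x - a| ≤ |x - y|) :
    ∫ x in s..t, infDist x S ^ 2 = ((t - a) ^ 3 - (s - a) ^ 3) / 3 := by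
  refine (integral_infDist_sq_le hst ha).antisymm ?_
  simpa [Real.dist_eq, integral_sub_sq] using
    integral_infDist_sq_mono (S := {a}) hst fun x hx => by
      rw [infDist_singleton]
      exact (le_infDist ⟨a, ha⟩).2 (hnear x hx)

lemma integral_infDist_sq_gap {S : Set ℝ} {b c : ℝ} (hb : b ∈ S) (hc : c ∈ S) (hbc : b ≤ c)
    (hgap : ∀ y ∈ S, y ≤ b ∨ c ≤ y) :
    ∫ x in b..c, infDist x S ^ 2 = (c - b) ^ 3 / 12 := by
  rw [← integral_infDist_sq_add_adjacent S b ((b + c) / 2) c,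
    integral_infDist_sq_of_nearest (by linarith) hb,
    integral_infDist_sq_of_nearest (by linarith) hc]
  · ring
  all_goals
    intro x hx y hy
    have := hx.1
    have := hx.2
    have := hgap y hy
    grind

lemma pow_three_div_three_le_integral_of_isGreatest {S : Set ℝ} {b : ℝ} (hb : IsGreatest S b)
    (q : ℝ) : (q - b) ^ 3 / 3 ≤ ∫ x in b..q, infDist x S ^ 2 := by
  rcases le_total b q with hbq | hqb
  · rw [integral_infDist_sq_of_nearest hbq hb.1]
    · exact le_of_eq (by ring)
    · intro x hx y hy
      exact abs_le_abs_of_nonneg (sub_nonneg.2 hx.1) (sub_le_sub_left (hb.2 hy) x)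
  · have := integral_infDist_sq_le hqb hb.1
    rw [intervalIntegral.integral_symm]
    linarith

lemma pow_three_div_three_le_integral_of_isLeast {S : Set ℝ} {a : ℝ} (ha : IsLeast S a)
    (p : ℝ) : (a - p) ^ 3 / 3 ≤ ∫ x in p..a, infDist x S ^ 2 := by
  rcases le_total p a with hpa | hap
  · rw [integral_infDist_sq_of_nearest hpa ha.1]
    · exact le_of_eq (by ring)
    · intro x hx y hy
      rw [abs_sub_comm x a, abs_sub_comm x y]
      exact abs_le_abs_of_nonneg (sub_nonneg.2 hx.2) (sub_le_sub_right (ha.2 hy) x)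
  · have := integral_infDist_sq_le hap ha.1
    rw [intervalIntegral.integral_symm]
    linarith

/-! ### Quantization of Lebesgue measure on an interval -/

lemma tangent_le_pow_three {x r : ℝ} (h : 0 ≤ x + 2 * r) :
    3 * r ^ 2 * x - 2 * r ^ 3 ≤ x ^ 3 := by
  linarith [mul_nonneg (sq_nonneg (x - r)) h]

-- The Legendre form, linear in the number of points, of the bound `(b - a) ^ 3 / (12 * n ^ 2)`
-- for `n` gaps: a gap `g` costs `g ^ 3 / 12`, with tangent `r ^ 2 * g - 4 / 3 * r ^ 3` at `2 * r`.
lemma sub_le_integral_infDist_sq_of_isLeast_of_isGreatest {r : ℝ} (hr : 0 ≤ r) {a : ℝ}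
    {S : Finset ℝ} : ∀ {b : ℝ}, IsLeast (S : Set ℝ) a → IsGreatest (S : Set ℝ) b →
    r ^ 2 * (b - a) - 4 / 3 * (S.card - 1) * r ^ 3 ≤ ∫ x in a..b, infDist x (S : Set ℝ) ^ 2 := by
  induction S using Finset.induction_on_max with
  | empty => simp [IsLeast]
  | insert c T hmax ih =>
    intro b ha hb
    obtain rfl : c = b := (hb.2 (by simp)).antisymm <| by
      rcases Finset.mem_insert.1 hb.1 with h | h
      exacts [h.le, (hmax b h).le]
    have hcT : c ∉ T := fun h => (hmax c h).false
    rw [Finset.card_insert_of_notMem hcT, Nat.cast_succ]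
    rcases T.eq_empty_or_nonempty with rfl | hT
    · obtain rfl : a = c := by simpa using ha.1
      simp
    have hb' := T.isGreatest_max' hT
    set b' := T.max' hT
    have hb'c : b' < c := hmax b' hb'.1
    have haT : IsLeast (T : Set ℝ) a := by
      refine ⟨(Finset.mem_insert.1 ha.1).resolve_left ?_, fun y hy => ha.2 (by simp_all)⟩
      exact ((ha.2 (Finset.mem_insert_of_mem hb'.1)).trans_lt hb'c).ne
    have hleft : ∫ x in a..b', infDist x (T : Set ℝ) ^ 2 ≤
        ∫ x in a..b', infDist x ((insert c T : Finset ℝ) : Set ℝ) ^ 2 := by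
      refine integral_infDist_sq_mono (haT.2 hb'.1) fun x hx => ?_
      refine infDist_le_infDist_of_forall_exists_dist_le ⟨c, by simp⟩ fun y hy => ?_
      rcases Finset.mem_insert.1 hy with rfl | hyT
      · refine ⟨b', hb'.1, ?_⟩
        rw [dist_comm x, dist_comm x]
        exact abs_le_abs_of_nonneg (sub_nonneg.2 hx.2) (sub_le_sub_right hb'c.le x)
      · exact ⟨y, hyT, le_rfl⟩
    have hgap := integral_infDist_sq_gap (S := (insert c T : Finset ℝ)) (by simp [hb'.1])
      (by simp) hb'c.le fun y hy => by
        rcases Finset.mem_insert.1 hy with rfl | hyT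
        exacts [Or.inr le_rfl, Or.inl (hb'.2 hyT)]
    have htan := tangent_le_pow_three (x := (c - b') / 2) (r := r) (by linarith)
    rw [← integral_infDist_sq_add_adjacent _ a b' c, hgap]
    linarith [ih haT hb']

lemma sub_le_integral_infDist_sq {S : Finset ℝ} {r a b : ℝ} (hr : 0 ≤ r)
    (ha : IsLeast (S : Set ℝ) a) (hb : IsGreatest (S : Set ℝ) b) (p q : ℝ) :
    (a - p) ^ 3 / 3 + (r ^ 2 * (b - a) - 4 / 3 * (S.card - 1) * r ^ 3) + (q - b) ^ 3 / 3 ≤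
      ∫ x in p..q, infDist x (S : Set ℝ) ^ 2 := by
  rw [← integral_infDist_sq_add_adjacent _ p b q, ← integral_infDist_sq_add_adjacent _ p a b]
  exact add_le_add (add_le_add (pow_three_div_three_le_integral_of_isLeast ha p)
    (sub_le_integral_infDist_sq_of_isLeast_of_isGreatest hr ha hb))
    (pow_three_div_three_le_integral_of_isGreatest hb q)

lemma exists_pow_three_div_eq_tangent {d m : ℝ} (hd : 0 ≤ d) (hm : 0 < m) :
    ∃ r, 0 ≤ r ∧ d ^ 3 / (3 * m ^ 2) = r ^ 2 * d - 2 / 3 * m * r ^ 3 := by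
  refine ⟨d / m, by positivity, ?_⟩
  field_simp
  ring

lemma tangent_le_pow_three_div {x r m : ℝ} (hx : 0 ≤ x) (hr : 0 ≤ r) (hm : 0 < m) :
    r ^ 2 * x - 2 / 3 * m * r ^ 3 ≤ x ^ 3 / (3 * m ^ 2) := by
  have htan := tangent_le_pow_three (x := x / m) (r := r) (by positivity)
  calc r ^ 2 * x - 2 / 3 * m * r ^ 3 = m / 3 * (3 * r ^ 2 * (x / m) - 2 * r ^ 3) := by
        field_simp
    _ ≤ m / 3 * (x / m) ^ 3 := by gcongr
    _ = x ^ 3 / (3 * m ^ 2) := by field_simp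

-- `2 * card - 1` is the number of half-cells into which the interval is cut.
lemma pow_three_div_le_integral_infDist_sq_of_subset_Ici {S : Finset ℝ} {p b : ℝ}
    (hS : (S : Set ℝ) ⊆ Ici p) (hb : IsGreatest (S : Set ℝ) b) (q : ℝ) :
    (b - p) ^ 3 / (3 * (2 * S.card - 1) ^ 2) + (q - b) ^ 3 / 3 ≤
      ∫ x in p..q, infDist x (S : Set ℝ) ^ 2 := by
  have hcard : (1 : ℝ) ≤ S.card := mod_cast Finset.card_pos.2 ⟨b, hb.1⟩
  have hleast := S.isLeast_min' ⟨b, hb.1⟩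
  obtain ⟨r, hr, heq⟩ := exists_pow_three_div_eq_tangent (sub_nonneg.2 (hS hb.1))
    (by linarith : (0 : ℝ) < 2 * S.card - 1)
  have htan := tangent_le_pow_three
    (by linarith [mem_Ici.1 (hS hleast.1)] : 0 ≤ S.min' ⟨b, hb.1⟩ - p + 2 * r)
  linarith [sub_le_integral_infDist_sq hr hleast hb p q]

lemma pow_three_div_le_integral_infDist_sq_of_subset_Iic {S : Finset ℝ} {a q : ℝ}
    (hS : (S : Set ℝ) ⊆ Iic q) (ha : IsLeast (S : Set ℝ) a) (p : ℝ) :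
    (a - p) ^ 3 / 3 + (q - a) ^ 3 / (3 * (2 * S.card - 1) ^ 2) ≤
      ∫ x in p..q, infDist x (S : Set ℝ) ^ 2 := by
  have hcard : (1 : ℝ) ≤ S.card := mod_cast Finset.card_pos.2 ⟨a, ha.1⟩
  have hgreatest := S.isGreatest_max' ⟨a, ha.1⟩
  obtain ⟨r, hr, heq⟩ := exists_pow_three_div_eq_tangent (sub_nonneg.2 (hS ha.1))
    (by linarith : (0 : ℝ) < 2 * S.card - 1)
  have htan := tangent_le_pow_three
    (by linarith [mem_Iic.1 (hS hgreatest.1)] : 0 ≤ q - S.max' ⟨a, ha.1⟩ + 2 * r)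
  linarith [sub_le_integral_infDist_sq hr ha hgreatest p q]

-- Points further than `r` outside `[p, q]` are first moved onto `[p - r, q + r]`.
lemma sub_le_integral_infDist_sq_clamped {S : Finset ℝ} {r a b p q : ℝ} (hr : 0 ≤ r)
    (hpq : p ≤ q) (ha : IsLeast (S : Set ℝ) a) (hb : IsGreatest (S : Set ℝ) b)
    (haq : a ≤ q + r) (hpb : p - r ≤ b) :
    (max a (p - r) - p) ^ 3 / 3 + (r ^ 2 * (min b (q + r) - max a (p - r)) -
      4 / 3 * (S.card - 1) * r ^ 3) + (q - min b (q + r)) ^ 3 / 3 ≤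
      ∫ x in p..q, infDist x (S : Set ℝ) ^ 2 := by
  have hlu : p - r ≤ q + r := by linarith
  set proj : ℝ → ℝ := fun y => projIcc (p - r) (q + r) hlu y
  have hmono : Monotone proj := fun _ _ h => monotone_projIcc hlu h
  have hproj_a : proj a = max a (p - r) := by
    simp only [proj, coe_projIcc, min_eq_right haq, max_comm]
  have hproj_b : proj b = min b (q + r) := by
    simp only [proj, coe_projIcc, min_comm (q + r), max_eq_right (le_min hpb hlu)]
  have hleast : IsLeast ((S.image proj : Finset ℝ) : Set ℝ) (proj a) := by
    simpa using hmono.map_isLeast ha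
  have hgreatest : IsGreatest ((S.image proj : Finset ℝ) : Set ℝ) (proj b) := by
    simpa using hmono.map_isGreatest hb
  have hcard : ((S.image proj).card : ℝ) * r ^ 3 ≤ S.card * r ^ 3 :=
    mul_le_mul_of_nonneg_right (mod_cast Finset.card_image_le) (pow_nonneg hr 3)
  have hcore := sub_le_integral_infDist_sq hr hleast hgreatest p q
  have hmove : ∫ x in p..q, infDist x ((S.image proj : Finset ℝ) : Set ℝ) ^ 2 ≤
      ∫ x in p..q, infDist x (S : Set ℝ) ^ 2 := by
    refine integral_infDist_sq_mono hpq fun x hx => ?_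
    rw [Finset.coe_image]
    exact infDist_image_projIcc_le ⟨a, ha.1⟩ hlu ⟨by linarith [hx.1], by linarith [hx.2]⟩
  rw [hproj_a, hproj_b] at hcore
  linarith

-- Neighbouring parts share a cut point, so the `m + 1` points of the middle part and the `k` and
-- `l` points of the outer parts count `a` and `b` twice.
lemma exists_le_integral_infDist_sq_of_mem {S : Finset ℝ} {s p q t r c : ℝ}
    (hS : (S : Set ℝ) ⊆ Icc s t) (hsp : s ≤ p) (hpq : p ≤ q) (hqt : q ≤ t) (hr : 0 ≤ r)
    (hcS : c ∈ S) (hc : c ∈ Icc (p - r) (q + r)) :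
    ∃ (k l m : ℕ) (a b : ℝ), 1 ≤ k ∧ 1 ≤ l ∧ k + l + m = S.card + 1 ∧ s ≤ a ∧ b ≤ t ∧
      (a - s) ^ 3 / (3 * (2 * k - 1) ^ 2) + (p - a) ^ 3 / 3 ≤
        ∫ x in s..p, infDist x (S : Set ℝ) ^ 2 ∧
      (max a (p - r) - p) ^ 3 / 3 + (r ^ 2 * (min b (q + r) - max a (p - r)) -
        4 / 3 * m * r ^ 3) + (q - min b (q + r)) ^ 3 / 3 ≤
        ∫ x in p..q, infDist x (S : Set ℝ) ^ 2 ∧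
      (b - q) ^ 3 / 3 + (t - b) ^ 3 / (3 * (2 * l - 1) ^ 2) ≤
        ∫ x in q..t, infDist x (S : Set ℝ) ^ 2 := by
  obtain ⟨L, M, R, a, b, haL, haM, hbM, hbR, hLS, hRS, hcard, ha_near, hb_near, hL, hM, hR⟩ :=
    exists_split_at_nearest ⟨c, hcS⟩ hpq
  have hLs : (L : Set ℝ) ⊆ Ici s := fun y hy => (hS (hLS hy)).1
  have hRt : (R : Set ℝ) ⊆ Iic t := fun y hy => (hS (hRS hy)).2
  have hk : 1 ≤ L.card := Finset.card_pos.2 ⟨a, haL.1⟩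
  have hl : 1 ≤ R.card := Finset.card_pos.2 ⟨b, hbR.1⟩
  have hm : 1 ≤ M.card := Finset.card_pos.2 ⟨a, haM.1⟩
  have haq : a ≤ q + r := by
    have := ha_near c hcS
    rw [mem_Icc] at hc
    grind
  have hpb : p - r ≤ b := by
    have := hb_near c hcS
    rw [mem_Icc] at hc
    grind
  refine ⟨L.card, R.card, M.card - 1, a, b, hk, hl, by lia, hLs haL.1, hRt hbR.1, ?_, ?_, ?_⟩
  · exact (pow_three_div_le_integral_infDist_sq_of_subset_Ici hLs haL p).trans
      (integral_infDist_sq_mono hsp fun x hx => hL x hx.2)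
  · rw [Nat.cast_sub hm, Nat.cast_one]
    exact (sub_le_integral_infDist_sq_clamped hr hpq haM hbM haq hpb).trans
      (integral_infDist_sq_mono hpq hM)
  · exact (pow_three_div_le_integral_infDist_sq_of_subset_Iic hRt hbR q).trans
      (integral_infDist_sq_mono hqt fun x hx => hR x hx.1)


/-! ### The optimal five-point configuration -/

/-- The distance `p` from `0` to the first optimal mean. It makes the distortion of the
configuration `p`, `3 * p`, `3 / 4`, `3 / 2 - 3 * p`, `3 / 2 - p` stationary in `p`. -/
noncomputable def outerRadius : ℝ := (3 + 2 * √5) / 44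

/-- Half the distance from `3 / 4` to the neighbouring optimal means, so that
`3 * outerRadius + 2 * innerRadius = 3 / 4`. -/
noncomputable def innerRadius : ℝ := 3 / 8 - 3 / 2 * outerRadius

lemma outerRadius_sq : outerRadius ^ 2 = (24 * outerRadius + 1) / 176 := by
  have h5 : √5 ^ 2 = (5 : ℝ) := Real.sq_sqrt (by norm_num)
  unfold outerRadius
  linear_combination h5 / 484

lemma outerRadius_mem_Ioo : outerRadius ∈ Ioo (0.16982 : ℝ) 0.16983 := by
  have hlo : (2.23604 : ℝ) < √5 := Real.lt_sqrt_of_sq_lt (by norm_num)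
  have hhi : √5 < (2.23626 : ℝ) := (Real.sqrt_lt' (by norm_num)).2 (by norm_num)
  unfold outerRadius
  constructor <;> linarith

lemma innerRadius_pos : 0 < innerRadius := by
  have := outerRadius_mem_Ioo.2
  unfold innerRadius
  linarith

lemma innerRadius_sq : innerRadius ^ 2 = 27 / 176 - 9 / 11 * outerRadius := by
  unfold innerRadius
  linear_combination 9 / 4 * outerRadius_sq

lemma innerRadius_pow_three : innerRadius ^ 3 = 999 / 15488 - 1431 / 3872 * outerRadius := by
  rw [pow_succ, innerRadius_sq]
  unfold innerRadius
  linear_combination 27 / 22 * outerRadius_sq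

/-- The fifth quantization error `(109 - 30 * √5) / 5808` of `P2`, written linearly in
`outerRadius` so that it can be compared with the powers of `innerRadius`. -/
noncomputable def optimalDistortion : ℝ := 7 / 264 - 5 / 44 * outerRadius

/-- The share of the left end in the lower bound for the distortion of a set with `k` points up to
its point `a` nearest to `1 / 2`: the cost on `[0, 1 / 2]`, and the terms in `a` of the bound on
`[1 / 2, 1]`, where `a` is first moved to at least `1 / 2 - innerRadius`. The right end contributes
`boundaryCost` of the reflected point. -/
noncomputable def boundaryCost (k : ℕ) (a : ℝ) : ℝ :=
  (a ^ 3 / (3 * (2 * k - 1) ^ 2) + (1 / 2 - a) ^ 3 / 3) / 2 +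
    (max a (1 / 2 - innerRadius) - 1 / 2) ^ 3 / 3 -
    innerRadius ^ 2 * max a (1 / 2 - innerRadius)

section BoundaryCost

variable {k : ℕ} {a : ℝ}

lemma le_boundaryCost_of_le_sub_innerRadius (hk : 1 ≤ k) (ha : 0 ≤ a)
    (haR : a ≤ 1 / 2 - innerRadius) {δ : ℝ} (hδ : 0 ≤ δ) :
    δ ^ 2 / 4 - 2 / 3 * k * δ ^ 3 - innerRadius ^ 2 / 2 + 2 / 3 * innerRadius ^ 3 ≤
      boundaryCost k a := by
  have hm : (0 : ℝ) < 2 * k - 1 := by linarith [(Nat.one_le_cast (α := ℝ)).2 hk]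
  have houter := tangent_le_pow_three_div ha hδ hm
  have hinner := tangent_le_pow_three (x := 1 / 2 - a) (r := δ) (by linarith [innerRadius_pos])
  rw [boundaryCost, max_eq_right haR]
  linarith

lemma le_boundaryCost_of_sub_innerRadius_le (hk : 1 ≤ k) (ha : 1 / 2 - innerRadius ≤ a) :
    -innerRadius ^ 2 / 4 - 2 / 3 * k * innerRadius ^ 3 ≤ boundaryCost k a := by
  have hm : (0 : ℝ) < 2 * k - 1 := by linarith [(Nat.one_le_cast (α := ℝ)).2 hk]
  have hR := innerRadius_pos
  have ha0 : 0 ≤ a := by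
    have := outerRadius_mem_Ioo.1
    unfold innerRadius at ha
    linarith
  have houter := tangent_le_pow_three_div ha0 hR.le hm
  have hinner := tangent_le_pow_three (x := a - 1 / 2) (r := innerRadius) (by linarith)
  rw [boundaryCost, max_eq_left ha]
  linarith

lemma le_boundaryCost_one (ha : 1 / 2 - innerRadius ≤ a) :
    -innerRadius ^ 3 / 6 ≤ boundaryCost 1 a := by
  have hcube : innerRadius ^ 2 * a ≤ a ^ 3 / 6 := by
    have := outerRadius_mem_Ioo.1
    have ha' : 3 / 8 ≤ a := by
      unfold innerRadius at ha
      linarith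
    have hsq : innerRadius ^ 2 ≤ a ^ 2 / 6 := by nlinarith [innerRadius_sq]
    linarith [mul_le_mul_of_nonneg_right hsq (by linarith : 0 ≤ a)]
  have hend : (-innerRadius) ^ 3 ≤ (a - 1 / 2) ^ 3 :=
    Odd.pow_le_pow (by decide) |>.2 (by linarith)
  rw [boundaryCost, max_eq_left ha, Nat.cast_one]
  linarith

-- With two points the boundary cost is a cubic polynomial in `a` with double contact at its
-- minimum `3 * outerRadius`.
lemma le_boundaryCost_two (ha : 1 / 2 - innerRadius ≤ a) :
    optimalDistortion / 2 - 3 / 4 * innerRadius ^ 2 + 4 / 3 * innerRadius ^ 3 ≤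
      boundaryCost 2 a := by
  have hfactor : 0 ≤ a + 6 * outerRadius - 27 / 20 := by
    have := outerRadius_mem_Ioo.1
    unfold innerRadius at ha
    linarith
  have hcontact : boundaryCost 2 a - (optimalDistortion / 2 - 3 / 4 * innerRadius ^ 2 +
      4 / 3 * innerRadius ^ 3) =
        5 / 27 * ((a - 3 * outerRadius) ^ 2 * (a + 6 * outerRadius - 27 / 20)) := by
    rw [boundaryCost, max_eq_left ha, optimalDistortion, innerRadius_sq, innerRadius_pow_three,
      Nat.cast_ofNat]
    linear_combination (5 * a - 10 * outerRadius + 9 / 4 - 15 / 11) * outerRadius_sq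
  rw [← sub_nonneg, hcontact]
  positivity

-- Equality holds for `k = 2` and `a = 3 * outerRadius`.
lemma le_boundaryCost_add (hk : 1 ≤ k) (ha : 0 ≤ a) :
    optimalDistortion / 2 - 3 / 4 * innerRadius ^ 2 + 4 * innerRadius ^ 3 ≤
      boundaryCost k a + 4 / 3 * k * innerRadius ^ 3 := by
  obtain ⟨hlo, hhi⟩ := outerRadius_mem_Ioo
  have hV : optimalDistortion = 7 / 264 - 5 / 44 * outerRadius := rfl
  have hR2 := innerRadius_sq
  have hR3 := innerRadius_pow_three
  rcases le_total a (1 / 2 - innerRadius) with haR | haR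
  -- `δ` is the half-cell length `1 / (4 * k)` of `k` equal cells on `[0, 1 / 2]`, for `k = 1, 2`.
  · rcases hk.eq_or_lt with rfl | hk2
    · have := le_boundaryCost_of_le_sub_innerRadius le_rfl ha haR (δ := 1 / 4) (by norm_num)
      push_cast at this ⊢
      linarith
    · have hbound := le_boundaryCost_of_le_sub_innerRadius hk ha haR (δ := 1 / 8) (by norm_num)
      have hk2' : (2 : ℝ) ≤ k := mod_cast hk2
      have hlinear : (0 : ℝ) ≤ (k - 2) * (4 / 3 * innerRadius ^ 3 - 1 / 768) :=
        mul_nonneg (by linarith) (by linarith)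
      linarith
  · obtain rfl | rfl | hk3 : k = 1 ∨ k = 2 ∨ 3 ≤ k := by lia
    · have := le_boundaryCost_one haR
      push_cast
      linarith
    · have := le_boundaryCost_two haR
      push_cast
      linarith
    · have hbound := le_boundaryCost_of_sub_innerRadius_le hk haR
      have hk3' : (3 : ℝ) ≤ k := mod_cast hk3
      have hlinear : (0 : ℝ) ≤ (k - 3) * innerRadius ^ 3 :=
        mul_nonneg (by linarith) (by linarith)
      linarith

end BoundaryCost

/-! ### Distortion with respect to `P2` -/

lemma P2_eq_smul_restrict_add_restrict :
    P2 = (2⁻¹ : ENNReal) • (volume.restrict (Icc 0 (3 / 2)) + volume.restrict (Ioo (1 / 2) 1)) := by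
  have hdensity : (fun x => ENNReal.ofReal (f2 x)) =
      (2⁻¹ : ENNReal) • ((Icc 0 (3 / 2)).indicator 1 + (Ioo (1 / 2) 1).indicator 1) := by
    have hhalf : ENNReal.ofReal (1 / 2) = 2⁻¹ := by
      rw [one_div, ENNReal.ofReal_inv_of_pos two_pos, ENNReal.ofReal_ofNat]
    ext x
    rw [Pi.smul_apply, Pi.add_apply, smul_eq_mul]
    by_cases hx : x ∈ Ioo (1 / 2 : ℝ) 1
    · have hx' : x ∈ Icc (0 : ℝ) (3 / 2) := ⟨by linarith [hx.1], by linarith [hx.2]⟩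
      have hout : x ∉ Icc (0 : ℝ) (1 / 2) ∪ Icc (1 : ℝ) (3 / 2) := by
        rintro (h | h)
        exacts [h.2.not_gt hx.1, h.1.not_gt hx.2]
      rw [f2, if_neg hout, if_pos hx, indicator_of_mem hx, indicator_of_mem hx', Pi.one_apply,
        one_add_one_eq_two, ENNReal.ofReal_one, ENNReal.inv_mul_cancel two_ne_zero (by simp)]
    · have hmem : x ∈ Icc (0 : ℝ) (1 / 2) ∪ Icc (1 : ℝ) (3 / 2) ↔ x ∈ Icc (0 : ℝ) (3 / 2) := by
        simp only [mem_union, mem_Icc, mem_Ioo] at hx ⊢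
        grind
      rw [f2, indicator_of_notMem hx, if_neg hx, add_zero]
      by_cases hx' : x ∈ Icc (0 : ℝ) (3 / 2)
      · rw [if_pos (hmem.2 hx'), indicator_of_mem hx', Pi.one_apply, mul_one, hhalf]
      · rw [if_neg (mt hmem.1 hx'), indicator_of_notMem hx', ENNReal.ofReal_zero, mul_zero]
  have hIcc : Measurable ((Icc (0 : ℝ) (3 / 2)).indicator (1 : ℝ → ENNReal)) :=
    measurable_one.indicator measurableSet_Icc
  have hIoo : Measurable ((Ioo (1 / 2 : ℝ) 1).indicator (1 : ℝ → ENNReal)) :=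
    measurable_one.indicator measurableSet_Ioo
  rw [P2, hdensity, withDensity_smul _ (hIcc.add hIoo), withDensity_add_left hIcc,
    withDensity_indicator_one measurableSet_Icc, withDensity_indicator_one measurableSet_Ioo]

lemma integral_P2 {g : ℝ → ℝ} (hg : Continuous g) :
    ∫ x, g x ∂P2 = ((∫ x in (0 : ℝ)..3 / 2, g x) + ∫ x in (1 / 2 : ℝ)..1, g x) / 2 := by
  rw [P2_eq_smul_restrict_add_restrict, integral_smul_measure,
    integral_add_measure hg.integrableOn_Icc (hg.integrableOn_Icc.mono_set Ioo_subset_Icc_self),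
    integral_Icc_eq_integral_Ioc, ← integral_Ioc_eq_integral_Ioo,
    ← intervalIntegral.integral_of_le (by norm_num),
    ← intervalIntegral.integral_of_le (by norm_num)]
  simp [inv_mul_eq_div]

lemma distortion_P2 {S : Set ℝ} (hS : S.Nonempty) :
    distortion P2 S = (∫ x in (0 : ℝ)..1 / 2, infDist x S ^ 2) / 2 +
      (∫ x in (1 / 2 : ℝ)..1, infDist x S ^ 2) + (∫ x in (1 : ℝ)..3 / 2, infDist x S ^ 2) / 2 := by
  rw [distortion_eq_integral_infDist_sq P2 hS, integral_P2 (g := fun x => infDist x S ^ 2)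
      ((continuous_infDist_pt S).pow 2),
    ← integral_infDist_sq_add_adjacent S 0 1 (3 / 2),
    ← integral_infDist_sq_add_adjacent S 0 (1 / 2) 1]
  ring

lemma distortion_P2_mono {S T : Set ℝ} (hS : S.Nonempty) (hT : T.Nonempty)
    (h : ∀ x ∈ Icc (0 : ℝ) (3 / 2), infDist x S ≤ infDist x T) :
    distortion P2 S ≤ distortion P2 T := by
  have hsub : ∀ s t : ℝ, 0 ≤ s → s ≤ t → t ≤ 3 / 2 →
      ∫ x in s..t, infDist x S ^ 2 ≤ ∫ x in s..t, infDist x T ^ 2 := fun s t hs hst ht =>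
    integral_infDist_sq_mono hst fun x hx => h x (Icc_subset_Icc hs ht hx)
  rw [distortion_P2 hS, distortion_P2 hT]
  linarith [hsub 0 (1 / 2) (by norm_num) (by norm_num) (by norm_num),
    hsub (1 / 2) 1 (by norm_num) (by norm_num) (by norm_num),
    hsub 1 (3 / 2) (by norm_num) (by norm_num) (by norm_num)]

/-! ### Lower bound -/

lemma exists_boundaryCost_add_le_distortion {S : Finset ℝ} (hS : (S : Set ℝ) ⊆ Icc 0 (3 / 2))
    {c : ℝ} (hcS : c ∈ S) (hc : c ∈ Icc (1 / 2 - innerRadius) (1 + innerRadius)) :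
    ∃ (k l m : ℕ) (a b : ℝ), 1 ≤ k ∧ 1 ≤ l ∧ k + l + m = S.card + 1 ∧ 0 ≤ a ∧ b ≤ 3 / 2 ∧
      boundaryCost k a + boundaryCost l (3 / 2 - b) + 3 / 2 * innerRadius ^ 2 -
        4 / 3 * m * innerRadius ^ 3 ≤ distortion P2 S := by
  obtain ⟨k, l, m, a, b, hk, hl, hcard, ha, hb, hleft, hmiddle, hright⟩ :=
    exists_le_integral_infDist_sq_of_mem hS (by norm_num) (by norm_num) (by norm_num)
      innerRadius_pos.le hcS hc
  refine ⟨k, l, m, a, b, hk, hl, hcard, ha, hb, ?_⟩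
  have hreflect : min b (1 + innerRadius) = 3 / 2 - max (3 / 2 - b) (1 / 2 - innerRadius) := by
    grind
  rw [hreflect] at hmiddle
  rw [sub_zero] at hleft
  rw [distortion_P2 ⟨c, hcS⟩, boundaryCost, boundaryCost]
  linarith

lemma sq_div_two_le_distortion_P2 {S : Set ℝ} (hS : S.Nonempty) {r : ℝ} (hr : 0 ≤ r)
    (hfar : ∀ y ∈ S, y ∉ Icc (1 / 2 - r) (1 + r)) : r ^ 2 / 2 ≤ distortion P2 S := by
  have hmiddle : ∫ _ in (1 / 2 : ℝ)..1, r ^ 2 ≤ ∫ x in (1 / 2 : ℝ)..1, infDist x S ^ 2 := by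
    refine intervalIntegral.integral_mono_on (by norm_num) intervalIntegrable_const
      (intervalIntegrable_infDist_sq S _ _) fun x hx => ?_
    refine pow_le_pow_left₀ hr ((le_infDist hS).2 fun y hy => ?_) 2
    have hy := hfar y hy
    rw [mem_Icc] at hx hy
    rw [Real.dist_eq]
    grind
  have hleft : 0 ≤ ∫ x in (0 : ℝ)..1 / 2, infDist x S ^ 2 :=
    intervalIntegral.integral_nonneg (by norm_num) fun x _ => sq_nonneg _
  have hright : 0 ≤ ∫ x in (1 : ℝ)..3 / 2, infDist x S ^ 2 :=
    intervalIntegral.integral_nonneg (by norm_num) fun x _ => sq_nonneg _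
  rw [intervalIntegral.integral_const, smul_eq_mul] at hmiddle
  rw [distortion_P2 hS]
  linarith

lemma optimalDistortion_le_of_subset_Icc {S : Finset ℝ} (hne : S.Nonempty) (hcard : S.card ≤ 5)
    (hS : (S : Set ℝ) ⊆ Icc 0 (3 / 2)) : optimalDistortion ≤ distortion P2 S := by
  by_cases hnear : ∃ c ∈ S, c ∈ Icc (1 / 2 - innerRadius) (1 + innerRadius)
  · obtain ⟨c, hcS, hc⟩ := hnear
    obtain ⟨k, l, m, a, b, hk, hl, hklm, ha, hb, hbound⟩ :=
      exists_boundaryCost_add_le_distortion hS hcS hc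
    have hleft := le_boundaryCost_add hk ha
    have hright := le_boundaryCost_add hl (sub_nonneg.2 hb)
    have hcount : ((k + l + m : ℕ) : ℝ) * innerRadius ^ 3 ≤ 6 * innerRadius ^ 3 :=
      mul_le_mul_of_nonneg_right (mod_cast by lia) (pow_nonneg innerRadius_pos.le 3)
    push_cast at hcount
    linarith
  · push Not at hnear
    refine le_trans ?_ (sq_div_two_le_distortion_P2 hne innerRadius_pos.le hnear)
    rw [innerRadius_sq, optimalDistortion]
    linarith [outerRadius_mem_Ioo.2]

lemma optimalDistortion_le_distortion_P2 {S : Finset ℝ} (hne : S.Nonempty) (hcard : S.card ≤ 5) :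
    optimalDistortion ≤ distortion P2 S := by
  have h : (0 : ℝ) ≤ 3 / 2 := by norm_num
  calc optimalDistortion
      ≤ distortion P2 (S.image fun y => (projIcc 0 (3 / 2) h y : ℝ) : Finset ℝ) :=
        optimalDistortion_le_of_subset_Icc (hne.image _) (Finset.card_image_le.trans hcard) <| by
          rw [Finset.coe_image, image_subset_iff]
          exact fun y _ => (projIcc 0 (3 / 2) h y).2
    _ ≤ distortion P2 S := by
        rw [Finset.coe_image]
        exact distortion_P2_mono (hne.to_set.image _) hne fun x hx =>
          infDist_image_projIcc_le hne h hx

/-! ### Upper bound -/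

/-- The optimal set of five-means, symmetric about `3 / 4`. -/
noncomputable def optimalMeans : Finset ℝ :=
  {outerRadius, 3 * outerRadius, 3 / 4, 3 / 2 - 3 * outerRadius, 3 / 2 - outerRadius}

lemma optimalMeans_nonempty : optimalMeans.Nonempty :=
  Finset.insert_nonempty _ _

lemma card_optimalMeans_le : optimalMeans.card ≤ 5 :=
  Finset.card_le_five

lemma coe_optimalMeans : (optimalMeans : Set ℝ) =
    {(3 + 2 * √5) / 44, 3 * (3 + 2 * √5) / 44, 3 / 4, (57 - 6 * √5) / 44, (63 - 2 * √5) / 44} := by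
  have h2 : 3 * outerRadius = 3 * (3 + 2 * √5) / 44 := by unfold outerRadius; ring
  have h4 : 3 / 2 - 3 * outerRadius = (57 - 6 * √5) / 44 := by unfold outerRadius; ring
  have h5 : 3 / 2 - outerRadius = (63 - 2 * √5) / 44 := by unfold outerRadius; ring
  simp only [optimalMeans, Finset.coe_insert, Finset.coe_singleton]
  rw [h4, h5, h2, outerRadius]

lemma optimalDistortion_eq : optimalDistortion = (109 - 30 * √5) / 5808 := by
  unfold optimalDistortion outerRadius
  ring

lemma distortion_P2_optimalMeans_le : distortion P2 optimalMeans ≤ optimalDistortion := by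
  obtain ⟨hlo, hhi⟩ := outerRadius_mem_Ioo
  have hR : innerRadius = 3 / 8 - 3 / 2 * outerRadius := rfl
  have hcell : ∀ {s t : ℝ} (a : ℝ), a ∈ optimalMeans → s ≤ t →
      ∫ x in s..t, infDist x (optimalMeans : Set ℝ) ^ 2 ≤ ((t - a) ^ 3 - (s - a) ^ 3) / 3 :=
    fun _ ha hst => integral_infDist_sq_le hst (Finset.mem_coe.2 ha)
  set p := outerRadius
  set R := innerRadius
  have hcell₁ := hcell (s := 0) (t := 2 * p) p (by simp [optimalMeans, p]) (by linarith)
  have hcell₂ := hcell (s := 2 * p) (t := 1 / 2) (3 * p) (by simp [optimalMeans, p]) (by linarith)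
  have hcell₂' := hcell (s := 1 / 2) (t := 3 / 4 - R) (3 * p) (by simp [optimalMeans, p])
    (by linarith)
  have hcell₃ := hcell (s := 3 / 4 - R) (t := 3 / 4 + R) (3 / 4) (by simp [optimalMeans])
    (by linarith)
  have hcell₄ := hcell (s := 3 / 4 + R) (t := 1) (3 / 2 - 3 * p) (by simp [optimalMeans, p])
    (by linarith)
  have hcell₄' := hcell (s := 1) (t := 3 / 2 - 2 * p) (3 / 2 - 3 * p) (by simp [optimalMeans, p])
    (by linarith)
  have hcell₅ := hcell (s := 3 / 2 - 2 * p) (t := 3 / 2) (3 / 2 - p) (by simp [optimalMeans, p])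
    (by linarith)
  have hsum : optimalDistortion = p ^ 3 + 4 / 3 * R ^ 3 + (3 * p - 1 / 2) ^ 3 / 3 := by
    rw [optimalDistortion]
    linear_combination -(4 / 3) * innerRadius_pow_three -
      (10 * p - 9 / 2 + 15 / 11) * outerRadius_sq
  rw [distortion_P2 optimalMeans_nonempty, hsum,
    ← integral_infDist_sq_add_adjacent _ 0 (2 * p) (1 / 2),
    ← integral_infDist_sq_add_adjacent _ (1 / 2) (3 / 4 + R) 1,
    ← integral_infDist_sq_add_adjacent _ (1 / 2) (3 / 4 - R) (3 / 4 + R),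
    ← integral_infDist_sq_add_adjacent _ 1 (3 / 2 - 2 * p) (3 / 2)]
  rw [show 3 / 4 - R - 3 * p = R by linarith] at hcell₂'
  rw [show 3 / 4 + R - (3 / 2 - 3 * p) = -R by linarith] at hcell₄
  linarith

theorem stmt_8 :
    IsOptimal P2 5
      {(3 + 2 * Real.sqrt 5) / 44, 3 * (3 + 2 * Real.sqrt 5) / 44, 3 / 4,
        (57 - 6 * Real.sqrt 5) / 44, (63 - 2 * Real.sqrt 5) / 44} ∧
    quantErr P2 5 = (109 - 30 * Real.sqrt 5) / 5808 := by
  have hvalue : distortion P2 optimalMeans = optimalDistortion :=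
    distortion_P2_optimalMeans_le.antisymm
      (optimalDistortion_le_distortion_P2 optimalMeans_nonempty card_optimalMeans_le)
  have hoptimal : IsOptimal P2 5 optimalMeans :=
    isOptimal_of_forall_distortion_le optimalMeans_nonempty card_optimalMeans_le
      fun _ hne hcard => hvalue.trans_le (optimalDistortion_le_distortion_P2 hne hcard)
  rw [← coe_optimalMeans, ← optimalDistortion_eq]
  exact ⟨hoptimal, hoptimal.2.2.2.symm.trans hvalue⟩
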